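/- Let X, Y, H ∈ A₁ be an sl(2) triplet such that H = μpq + ν for some μ ∈ ℂ∖{0} and ν ∈ ℂ. Then: (1) μ ∈ {1, −1, 2, −2}. (2a) If μ = 1, then ν = −1/2 and there exists a ∈ ℂ∖{0} such that X = −(1/2)a·q² and Y = (1/(2a))·p². (2b) If μ = 2, then, writing b = ν, there exists a ∈ ℂ∖{0} such that either X = a(b + pq)q and Y = −(1/a)p, or X = −(1/a)q and Y = a·p(b + pq). -/

import Mathlib

noncomputable section

/-- The defining relation of the first Weyl algebra: `p * q = q * p + 1`. -/
inductive weylRel : FreeAlgebra ℂ (Fin 2) → FreeAlgebra ℂ (Fin 2) → Prop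
  | rel : weylRel (FreeAlgebra.ι ℂ 0 * FreeAlgebra.ι ℂ 1)
      (FreeAlgebra.ι ℂ 1 * FreeAlgebra.ι ℂ 0 + 1)

/-- The first Weyl algebra `A₁`, regarded as a complex Lie algebra via the commutator. -/
abbrev Weyl : Type := RingQuot weylRel

/-- The generator `p` of the Weyl algebra. -/
def wp : Weyl := RingQuot.mkAlgHom ℂ weylRel (FreeAlgebra.ι ℂ 0)

/-- The generator `q` of the Weyl algebra. -/
def wq : Weyl := RingQuot.mkAlgHom ℂ weylRel (FreeAlgebra.ι ℂ 1)

/-!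
The monomials `p ^ i * q ^ j` span `A₁`, and `ad (p * q)` scales them by `j - i`. Hence `μ = ±2 / k`
for a natural number `k`, and for the positive sign `X = f(θ) q ^ k` and `Y = p ^ k g(θ)` with
`θ = p * q` and polynomials `f`, `g`; the negative sign reduces to this by exchanging `X` and `Y`.
Moving powers of `p` and `q` past `θ` shifts `θ` by integers, so `[X, Y] = H` becomes the difference
equation `F(θ) - F(θ + k) = (2 / k) θ + ν` for `F = f g (θ - 1) ⋯ (θ - k)`. As `F` vanishes at `1`,
it is the unique quadratic solution. Comparing degrees gives `k ≤ 2`, and the factors `f` and `g`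
are read off from `F`.
-/

open Polynomial

section ShiftOperator

theorem eq_C_of_taylor_eq_self {R : Type*} [CommRing R] [IsDomain R] [CharZero R] {f : R[X]}
    {r : R} (hr : r ≠ 0) (hf : taylor r f = f) : f = C (f.eval 0) := by
  have eval_add (x : R) : f.eval (x + r) = f.eval x := by rw [← taylor_eval, hf]
  have eval_mul (n : ℕ) : f.eval (n * r) = f.eval 0 := by
    induction n with
    | zero => simp
    | succ n ih => rw [Nat.cast_succ, add_one_mul, eval_add, ih]
  have injective_mul : Function.Injective fun n : ℕ => (n : R) * r := fun m n hmn => by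
    simpa [hr] using hmn
  refine eq_of_infinite_eval_eq _ _ ((Set.infinite_range_of_injective injective_mul).mono ?_)
  rintro _ ⟨n, rfl⟩
  simpa using eval_mul n

theorem eq_of_sub_taylor_eq {R : Type*} [CommRing R] [IsDomain R] [CharZero R] {f g : R[X]}
    {r x : R} (hr : r ≠ 0) (hfg : f - taylor r f = g - taylor r g) (hx : f.eval x = g.eval x) :
    f = g := by
  have hconst : f - g = C ((f - g).eval 0) :=
    eq_C_of_taylor_eq_self hr (by rw [map_sub]; linear_combination -hfg)
  have hzero : (f - g).eval 0 = 0 := by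
    simpa [hx] using (congrArg (eval x) hconst).symm
  rwa [hzero, C_0, sub_eq_zero] at hconst

variable {K : Type*} [Field K]

theorem eq_of_sub_taylor_eq_linear [CharZero K] {F : K[X]} {k ν : K} (hk : k ≠ 0)
    (hF : F - taylor k F = C (2 / k) * X + C ν) (hone : F.eval 1 = 0) :
    F = C (-(1 / k ^ 2)) * ((X - 1) * (X + C (k * (ν - 1) + 1))) := by
  refine eq_of_sub_taylor_eq hk (hF.trans (Polynomial.funext fun x => ?_)) (x := 1) (by simp [hone])
  simp only [eval_add, eval_sub, eval_mul, eval_C, eval_X, eval_one, taylor_eval]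
  field_simp
  ring

theorem le_two_of_mul_taylor_ascPochhammer_eq {f : K[X]} {k : ℕ} {r c d : K} (hc : c ≠ 0)
    (hf : f * taylor r (ascPochhammer K k) = C c * ((X - 1) * (X + C d))) : k ≤ 2 := by
  have hdvd : taylor r (ascPochhammer K k) ∣ C c * ((X - 1) * (X + C d)) :=
    ⟨f, by rw [← hf, mul_comm]⟩
  have hdeg : (C c * ((X - 1) * (X + C d))).natDegree = 2 := by
    rw [natDegree_C_mul hc]
    compute_degree!
  have hne : C c * ((X - 1) * (X + C d)) ≠ 0 := ne_zero_of_natDegree_gt (hdeg ▸ two_pos)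
  simpa [hdeg, natDegree_taylor, ascPochhammer_natDegree] using natDegree_le_of_dvd hdvd hne

theorem exists_of_mul_eq_neg_of_isUnit {f g : K[X]} {l : K[X]} (hfg : f * g = -l) (hg : IsUnit g) :
    ∃ a : K, a ≠ 0 ∧ f = C a * l ∧ g = C (-(1 / a)) := by
  obtain ⟨e, he, rfl⟩ := Polynomial.isUnit_iff.1 hg
  have he := he.ne_zero
  refine ⟨-(1 / e), by simpa using he, ?_, ?_⟩
  · have hinv : C (1 / e) * C e = (1 : K[X]) := by rw [← C_mul, one_div_mul_cancel he, C_1]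
    rw [C_neg]
    linear_combination C (1 / e) * hfg - f * hinv
  · congr 1
    field_simp

theorem exists_of_mul_eq_neg_X_add_C {f g : K[X]} {ν : K} (hfg : f * g = -(X + C ν)) :
    ∃ a : K, a ≠ 0 ∧ ((f = C a * (X + C ν) ∧ g = C (-(1 / a))) ∨
      (f = C (-(1 / a)) ∧ g = C a * (X + C ν))) := by
  have hirr : Irreducible (-(X + C ν)) :=
    irreducible_of_degree_eq_one (by rw [degree_neg, degree_X_add_C])
  rcases hirr.isUnit_or_isUnit hfg.symm with hf | hg
  · obtain ⟨a, ha, hg, hf⟩ := exists_of_mul_eq_neg_of_isUnit ((mul_comm g f).trans hfg) hf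
    exact ⟨a, ha, Or.inr ⟨hf, hg⟩⟩
  · obtain ⟨a, ha, hfg⟩ := exists_of_mul_eq_neg_of_isUnit hfg hg
    exact ⟨a, ha, Or.inl hfg⟩

theorem exists_of_mul_mul_X_sub_C_eq {f g : K[X]} {b c d : K} (hb : b ≠ 0)
    (hfg : f * g * (X - C c) = C b * (X - C d)) :
    d = c ∧ ∃ a : K, a ≠ 0 ∧ f = C (b * a) ∧ g = C (1 / a) := by
  have hroot : b * (c - d) = 0 := by simpa using (congrArg (eval c) hfg).symm
  obtain rfl : d = c := (sub_eq_zero.1 ((mul_eq_zero.1 hroot).resolve_left hb)).symm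
  have hprod : f * g = C b := mul_right_cancel₀ (X_sub_C_ne_zero d) hfg
  have hunit : IsUnit (f * g) := hprod ▸ isUnit_C.2 hb.isUnit
  obtain ⟨r, -, rfl⟩ := Polynomial.isUnit_iff.1 (isUnit_of_mul_isUnit_left hunit)
  obtain ⟨e, he, rfl⟩ := Polynomial.isUnit_iff.1 (isUnit_of_mul_isUnit_right hunit)
  have hre : r * e = b := C_injective (by rw [C_mul, hprod])
  refine ⟨rfl, 1 / e, one_div_ne_zero he.ne_zero, ?_, by rw [one_div_one_div]⟩
  rw [← hre, mul_assoc, mul_one_div_cancel he.ne_zero, mul_one]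

end ShiftOperator

theorem semiconjBy_aeval {R A : Type*} [CommSemiring R] [Semiring A] [Algebra R A] {a x y : A}
    (h : SemiconjBy a x y) (f : R[X]) : SemiconjBy a (aeval x f) (aeval y f) := by
  induction f using Polynomial.induction_on' with
  | add f g hf hg => simpa only [map_add] using hf.add_right hg
  | monomial n r =>
    simpa only [aeval_monomial] using
      SemiconjBy.mul_right (Algebra.commute_algebraMap_right r a) (h.pow_right n)

/-- The canonical commutation relation `pq - qp = 1`, with the subtraction moved to the right. -/
def IsCanonicalPair {A : Type*} [Ring A] (p q : A) : Prop :=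
  p * q = q * p + 1

section AssociativeLie

attribute [local instance] LieRing.ofAssociativeRing

section LinearCoefficient

variable {K A : Type*} [Field K] [Ring A] [Algebra K A] {a x y : A} {μ ν c : K}

theorem mem_eigenspace_ad_of_lie_smul_add_smul_one (hμ : μ ≠ 0)
    (hx : ⁅μ • a + ν • (1 : A), x⁆ = c • x) : x ∈ (LieAlgebra.ad K A a).eigenspace (c / μ) := by
  have hlie : μ • ⁅a, x⁆ = c • x := by
    rw [← hx, add_lie, smul_lie, smul_lie, Ring.lie_def 1 x, one_mul, mul_one, sub_self, smul_zero,
      add_zero]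
  rw [Module.End.mem_eigenspace_iff, LieAlgebra.ad_apply, div_eq_inv_mul, mul_smul, ← hlie,
    inv_smul_smul₀ hμ]

theorem ne_zero_of_isSl2Triple_smul_add_smul_one [CharZero K]
    (ht : IsSl2Triple (μ • a + ν • (1 : A)) x y) : μ ≠ 0 := by
  rintro rfl
  have hzero : (2 : K) • x = 0 := by
    rw [← ht.lie_h_e_smul K, zero_smul, zero_add, smul_lie, Ring.lie_def, one_mul, mul_one,
      sub_self, smul_zero]
  exact ht.e_ne_zero ((smul_eq_zero_iff_right two_ne_zero).1 hzero)

theorem e_mem_eigenspace_ad_of_isSl2Triple [CharZero K]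
    (ht : IsSl2Triple (μ • a + ν • (1 : A)) x y) :
    x ∈ (LieAlgebra.ad K A a).eigenspace (2 / μ) :=
  mem_eigenspace_ad_of_lie_smul_add_smul_one (ne_zero_of_isSl2Triple_smul_add_smul_one ht)
    (ht.lie_h_e_smul K)

theorem f_mem_eigenspace_ad_of_isSl2Triple [CharZero K]
    (ht : IsSl2Triple (μ • a + ν • (1 : A)) x y) :
    y ∈ (LieAlgebra.ad K A a).eigenspace (-(2 / μ)) := by
  rw [← neg_div]
  exact mem_eigenspace_ad_of_lie_smul_add_smul_one (ne_zero_of_isSl2Triple_smul_add_smul_one ht)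
    (by rw [ht.lie_lie_smul_f K, neg_smul])

end LinearCoefficient

namespace IsCanonicalPair

section Ring

variable {R A : Type*} [CommRing R] [Ring A] [Algebra R A] {p q : A}

theorem semiconjBy_pow_left (h : IsCanonicalPair p q) (k : ℕ) :
    SemiconjBy (p ^ k) (p * q) (p * q + k) := by
  have semiconjBy_p : SemiconjBy p (p * q) (p * q + 1) := by
    rw [SemiconjBy, add_mul, one_mul, mul_assoc p q p, eq_sub_of_add_eq h.symm, mul_sub, mul_one,
      sub_add_cancel]
  induction k with
  | zero => simp
  | succ k ih =>
    rw [pow_succ', Nat.cast_succ, ← add_assoc, add_right_comm]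
    exact (semiconjBy_p.add_right (Nat.commute_cast p k)).mul_left ih

theorem semiconjBy_pow_right (h : IsCanonicalPair p q) (k : ℕ) :
    SemiconjBy (q ^ k) (p * q + k) (p * q) := by
  have semiconjBy_q : SemiconjBy q (p * q + 1) (p * q) := by
    rw [SemiconjBy, mul_add, mul_one, ← mul_assoc, eq_sub_of_add_eq h.symm, sub_mul, one_mul,
      sub_add_cancel]
  induction k with
  | zero => simp
  | succ k ih =>
    rw [pow_succ, Nat.cast_succ, ← add_assoc, add_right_comm]
    exact ih.mul_left (semiconjBy_q.add_right (Nat.commute_cast q k))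

theorem pow_mul_aeval (h : IsCanonicalPair p q) (k : ℕ) (f : R[X]) :
    p ^ k * aeval (p * q) f = aeval (p * q) (taylor (k : R) f) * p ^ k := by
  simpa [taylor_apply, aeval_comp] using (semiconjBy_aeval (h.semiconjBy_pow_left k) f).eq

theorem aeval_mul_pow (h : IsCanonicalPair p q) (k : ℕ) (f : R[X]) :
    aeval (p * q) f * q ^ k = q ^ k * aeval (p * q) (taylor (k : R) f) := by
  simpa [taylor_apply, aeval_comp] using (semiconjBy_aeval (h.semiconjBy_pow_right k) f).eq.symm

theorem pow_mul_pow (h : IsCanonicalPair p q) (k : ℕ) :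
    p ^ k * q ^ k = aeval (p * q) (ascPochhammer R k) := by
  induction k with
  | zero => simp
  | succ k ih =>
    have shift := h.pow_mul_aeval 1 (ascPochhammer R k)
    simp only [pow_one, Nat.cast_one] at shift
    calc p ^ (k + 1) * q ^ (k + 1) = p * (p ^ k * q ^ k) * q := by
          rw [pow_succ', pow_succ]; noncomm_ring
      _ = aeval (p * q) (taylor 1 (ascPochhammer R k)) * (p * q) := by rw [ih, shift, mul_assoc]
      _ = aeval (p * q) (ascPochhammer R (k + 1)) := by
          rw [ascPochhammer_succ_left, mul_comm X, map_mul, aeval_X, taylor_apply, C_1]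

theorem pow_mul_pow_swap (h : IsCanonicalPair p q) (k : ℕ) :
    q ^ k * p ^ k = aeval (p * q) (taylor (-k : R) (ascPochhammer R k)) := by
  induction k with
  | zero => simp
  | succ k ih =>
    have shift := h.aeval_mul_pow k (X - C (k + 1 : R))
    have hshift : taylor (k : R) (X - C (k + 1 : R)) = X - 1 := by
      rw [map_sub, taylor_X, taylor_C, C_add, C_1]
      ring
    have hqp : q * p = aeval (p * q) (X - 1 : R[X]) := by
      rw [map_sub, aeval_X, map_one, eq_sub_of_add_eq (Eq.symm h)]
    have hsucc : taylor (-↑(k + 1) : R) (ascPochhammer R (k + 1)) =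
        (X - C (k + 1 : R)) * taylor (-k : R) (ascPochhammer R k) := by
      rw [ascPochhammer_succ_left, taylor_mul, taylor_X, ← C_1, ← taylor_apply, taylor_taylor]
      simp only [Nat.cast_succ, neg_add_rev, C_add, C_neg, C_1]
      ring_nf
    calc q ^ (k + 1) * p ^ (k + 1) = q ^ k * (q * p) * p ^ k := by
          rw [pow_succ, pow_succ']; noncomm_ring
      _ = aeval (p * q) (X - C (k + 1 : R)) * (q ^ k * p ^ k) := by
          rw [hqp, ← hshift, ← shift, mul_assoc]
      _ = aeval (p * q) (taylor (-↑(k + 1) : R) (ascPochhammer R (k + 1))) := by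
          rw [ih, ← map_mul, hsucc]

theorem pow_mul_aeval_mul_pow (h : IsCanonicalPair p q) (k : ℕ) (f : R[X]) :
    p ^ k * aeval (p * q) f * q ^ k =
      aeval (p * q) (taylor (k : R) f * ascPochhammer R k) := by
  rw [h.pow_mul_aeval, mul_assoc, h.pow_mul_pow (R := R), map_mul]

theorem pow_mul_aeval_mul_pow_swap (h : IsCanonicalPair p q) (k : ℕ) (f : R[X]) :
    q ^ k * aeval (p * q) f * p ^ k =
      aeval (p * q) (taylor (-k : R) (f * ascPochhammer R k)) := by
  have shift := h.aeval_mul_pow k (taylor (-k : R) f)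
  rw [taylor_taylor, add_neg_cancel, taylor_zero] at shift
  rw [← shift, mul_assoc, h.pow_mul_pow_swap (R := R), taylor_mul, map_mul]

theorem lie_aeval_mul_pow_pow_mul_aeval (h : IsCanonicalPair p q) (k : ℕ) (f g : R[X]) :
    ⁅aeval (p * q) f * q ^ k, p ^ k * aeval (p * q) g⁆ =
      aeval (p * q) (f * g * taylor (-k : R) (ascPochhammer R k) -
        taylor (k : R) (f * g * taylor (-k : R) (ascPochhammer R k))) := by
  have left : aeval (p * q) f * q ^ k * (p ^ k * aeval (p * q) g) =
      aeval (p * q) (f * g * taylor (-k : R) (ascPochhammer R k)) := by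
    rw [mul_assoc, ← mul_assoc (q ^ k), h.pow_mul_pow_swap (R := R), ← map_mul, ← map_mul]
    ring_nf
  have right : p ^ k * aeval (p * q) g * (aeval (p * q) f * q ^ k) =
      aeval (p * q) (taylor (k : R) (f * g * taylor (-k : R) (ascPochhammer R k))) := by
    rw [mul_assoc, ← mul_assoc (aeval (p * q) g), ← map_mul, ← mul_assoc, h.pow_mul_aeval_mul_pow,
      taylor_mul _ (f * g), taylor_taylor, add_neg_cancel, taylor_zero, mul_comm g]
  rw [Ring.lie_def, left, right, map_sub]

theorem lie_pow_mul_pow (h : IsCanonicalPair p q) (i j : ℕ) :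
    ⁅p * q, p ^ i * q ^ j⁆ = (j - i : R) • (p ^ i * q ^ j) := by
  have hp : p * q * p ^ i = p ^ i * (p * q) - i • p ^ i := by
    rw [(h.semiconjBy_pow_left i).eq, add_mul, nsmul_eq_mul, add_sub_cancel_right]
  have hq : p * q * q ^ j = q ^ j * (p * q) + j • q ^ j := by
    rw [← (h.semiconjBy_pow_right j).eq, mul_add, nsmul_eq_mul, Nat.cast_comm]
  rw [Ring.lie_def, ← mul_assoc, hp, sub_mul, mul_assoc (p ^ i) (p * q), hq, sub_smul,
    Nat.cast_smul_eq_nsmul, Nat.cast_smul_eq_nsmul, mul_add, mul_smul_comm, smul_mul_assoc,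
    mul_assoc (p ^ i) (q ^ j)]
  abel

theorem mul_pow_succ (h : IsCanonicalPair p q) (i : ℕ) :
    q * p ^ (i + 1) = p ^ (i + 1) * q - (i + 1) • p ^ i := by
  have shift : p ^ i * p * q = p * q * p ^ i + i • p ^ i := by
    rw [mul_assoc, (h.semiconjBy_pow_left i).eq, add_mul, nsmul_eq_mul]
  rw [pow_succ, shift, ← pow_succ, pow_succ', ← mul_assoc, eq_sub_of_add_eq (Eq.symm h), sub_mul,
    one_mul, succ_nsmul]
  abel

theorem span_pow_mul_pow_eq_top (h : IsCanonicalPair p q) (hgen : Algebra.adjoin R {p, q} = ⊤) :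
    Submodule.span R (Set.range fun n : ℕ × ℕ => p ^ n.1 * q ^ n.2) = ⊤ := by
  set S := Submodule.span R (Set.range fun n : ℕ × ℕ => p ^ n.1 * q ^ n.2)
  have monomial_mem (i j : ℕ) : p ^ i * q ^ j ∈ S := Submodule.subset_span ⟨(i, j), rfl⟩
  have le_comap_p : S ≤ S.comap (LinearMap.mulLeft R p) := by
    refine Submodule.span_le.2 (Set.range_subset_iff.2 fun ⟨i, j⟩ => ?_)
    simpa [← mul_assoc, ← pow_succ'] using monomial_mem (i + 1) j
  have le_comap_q : S ≤ S.comap (LinearMap.mulLeft R q) := by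
    refine Submodule.span_le.2 (Set.range_subset_iff.2 fun ⟨i, j⟩ => ?_)
    cases i with
    | zero => simpa [← pow_succ'] using monomial_mem 0 (j + 1)
    | succ i =>
      have sub_mem := S.sub_mem (monomial_mem (i + 1) (j + 1))
        (S.smul_of_tower_mem (i + 1) (monomial_mem i j))
      simpa [← mul_assoc, h.mul_pow_succ, sub_mul, pow_succ' q] using sub_mem
  have mul_mem (x : A) (hx : x ∈ Algebra.adjoin R {p, q}) : ∀ s ∈ S, x * s ∈ S := by
    induction hx using Algebra.adjoin_induction with
    | mem x hx => rcases hx with rfl | rfl <;> assumption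
    | algebraMap r => exact fun s hs => by simpa [← Algebra.smul_def] using S.smul_mem r hs
    | add x y _ _ hx hy => exact fun s hs => by simpa [add_mul] using S.add_mem (hx s hs) (hy s hs)
    | mul x y _ _ hx hy => exact fun s hs => by simpa [mul_assoc] using hx _ (hy s hs)
  refine eq_top_iff.2 fun x _ => ?_
  simpa using mul_mem x (hgen ▸ trivial) 1 (by simpa using monomial_mem 0 0)

end Ring

section Field

variable {K A : Type*} [Field K] [Ring A] [Algebra K A] {p q : A}

theorem eigenspace_ad_mul (h : IsCanonicalPair p q) (hgen : Algebra.adjoin K {p, q} = ⊤) (c : K) :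
    (LieAlgebra.ad K A (p * q)).eigenspace c =
      Submodule.span K {x | ∃ i j : ℕ, (j - i : K) = c ∧ p ^ i * q ^ j = x} := by
  set W : K → Submodule K A := fun c =>
    Submodule.span K {x | ∃ i j : ℕ, (j - i : K) = c ∧ p ^ i * q ^ j = x}
  have le_eigenspace : W ≤ (LieAlgebra.ad K A (p * q)).eigenspace := by
    refine fun c => Submodule.span_le.2 ?_
    rintro _ ⟨i, j, rfl, rfl⟩
    exact Module.End.mem_eigenspace_iff.2 (h.lie_pow_mul_pow i j)
  have iSup_eq_top : ⨆ c, W c = ⊤ := by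
    rw [eq_top_iff, ← h.span_pow_mul_pow_eq_top hgen, Submodule.span_le, Set.range_subset_iff]
    exact fun ⟨i, j⟩ =>
      Submodule.mem_iSup_of_mem (j - i : K) (Submodule.subset_span ⟨i, j, rfl, rfl⟩)
  have indep := Module.End.eigenspaces_iSupIndep (LieAlgebra.ad K A (p * q))
  exact (congrFun ((indep.le_iff_eq_of_iSup_eq_top iSup_eq_top).1 le_eigenspace) c).symm

theorem exists_eq_sub_of_hasEigenvalue (h : IsCanonicalPair p q)
    (hgen : Algebra.adjoin K {p, q} = ⊤) {c : K}
    (hc : (LieAlgebra.ad K A (p * q)).HasEigenvalue c) : ∃ i j : ℕ, c = j - i := by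
  by_contra! hne
  refine hc ((h.eigenspace_ad_mul hgen c).trans (Submodule.span_eq_bot.2 ?_))
  rintro _ ⟨i, j, hij, -⟩
  exact absurd hij.symm (hne i j)

variable [CharZero K]

theorem exists_eq_aeval_mul_pow (h : IsCanonicalPair p q) (hgen : Algebra.adjoin K {p, q} = ⊤)
    {k : ℕ} {x : A} (hx : x ∈ (LieAlgebra.ad K A (p * q)).eigenspace (k : K)) :
    ∃ f : K[X], aeval (p * q) f * q ^ k = x := by
  rw [h.eigenspace_ad_mul hgen] at hx
  refine (Submodule.span_le (p := LinearMap.range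
    (LinearMap.mulRight K (q ^ k) ∘ₗ (aeval (p * q)).toLinearMap))).2 ?_ hx
  rintro _ ⟨i, j, hij, rfl⟩
  obtain rfl : j = i + k := by exact_mod_cast (sub_eq_iff_eq_add'.1 hij)
  exact ⟨ascPochhammer K i, by simp [← h.pow_mul_pow, pow_add, mul_assoc]⟩

theorem exists_eq_pow_mul_aeval (h : IsCanonicalPair p q) (hgen : Algebra.adjoin K {p, q} = ⊤)
    {k : ℕ} {x : A} (hx : x ∈ (LieAlgebra.ad K A (p * q)).eigenspace (-k : K)) :
    ∃ f : K[X], p ^ k * aeval (p * q) f = x := by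
  rw [h.eigenspace_ad_mul hgen] at hx
  refine (Submodule.span_le (p := LinearMap.range
    (LinearMap.mulLeft K (p ^ k) ∘ₗ (aeval (p * q)).toLinearMap))).2 ?_ hx
  rintro _ ⟨i, j, hij, rfl⟩
  obtain rfl : i = k + j := by
    rw [sub_eq_iff_eq_add, neg_add_eq_sub, eq_sub_iff_add_eq'] at hij
    exact_mod_cast hij.symm
  exact ⟨ascPochhammer K j, by simp [← h.pow_mul_pow, pow_add, mul_assoc]⟩

theorem transcendental_mul [Nontrivial A] (h : IsCanonicalPair p q) :
    Transcendental K (p * q) := by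
  intro halg
  have hint := halg.isIntegral
  -- Evaluating `p m(pq) q = 0` and `q m(pq) p = 0` shows that `m` and `m(X + 1)` divide each other
  -- up to a factor `X`, so `m` is periodic.
  set m := minpoly K (p * q)
  have hm : aeval (p * q) m = 0 := minpoly.aeval K (p * q)
  obtain ⟨a, ha⟩ : m ∣ taylor 1 m * X := by
    refine minpoly.dvd K _ ?_
    simpa [hm, -map_mul] using (h.pow_mul_aeval_mul_pow 1 m).symm
  obtain ⟨b, hb⟩ : taylor 1 m ∣ m * X := by
    have hdvd : m ∣ taylor (-1) (m * X) := by
      refine minpoly.dvd K _ ?_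
      simpa [hm, -map_mul, -taylor_mul] using (h.pow_mul_aeval_mul_pow_swap 1 m).symm
    simpa [taylor_taylor, -taylor_mul] using map_dvd (taylorAlgHom (1 : K)) hdvd
  have monic_m : m.Monic := minpoly.monic hint
  have monic_shift : (taylor 1 m).Monic := by rwa [Monic, leadingCoeff_taylor]
  have hab : a * b = X * X := by
    apply mul_left_cancel₀ (mul_ne_zero monic_m.ne_zero monic_shift.ne_zero)
    linear_combination -b * taylor 1 m * ha - taylor 1 m * X * hb
  have hperiod : taylor 1 m = m := by
    rcases prime_X.dvd_or_dvd (hab ▸ dvd_mul_left X X) with ⟨a', rfl⟩ | ⟨b', rfl⟩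
    · have hdvd : m ∣ taylor 1 m := ⟨a', mul_right_cancel₀ X_ne_zero (by rw [ha]; ring)⟩
      exact eq_of_monic_of_dvd_of_natDegree_le monic_m monic_shift hdvd (natDegree_taylor m 1).le
    · have hdvd : taylor 1 m ∣ m := ⟨b', mul_right_cancel₀ X_ne_zero (by rw [hb]; ring)⟩
      exact (eq_of_monic_of_dvd_of_natDegree_le monic_shift monic_m hdvd
        (natDegree_taylor m 1).ge).symm
  have hconst := eq_C_of_taylor_eq_self one_ne_zero hperiod
  exact (minpoly.natDegree_pos hint).ne' (natDegree_eq_zero.2 ⟨_, hconst.symm⟩)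

theorem exists_aeval_of_lie_eq [Nontrivial A] (h : IsCanonicalPair p q)
    (hgen : Algebra.adjoin K {p, q} = ⊤) {k : ℕ} (hk : k ≠ 0) {ν : K} {x y : A}
    (hx : x ∈ (LieAlgebra.ad K A (p * q)).eigenspace (k : K))
    (hy : y ∈ (LieAlgebra.ad K A (p * q)).eigenspace (-k : K))
    (hxy : ⁅x, y⁆ = (2 / k : K) • (p * q) + ν • (1 : A)) :
    ∃ f g : K[X], aeval (p * q) f * q ^ k = x ∧ p ^ k * aeval (p * q) g = y ∧
      f * g * taylor (-k : K) (ascPochhammer K k) =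
        C (-(1 / (k : K) ^ 2)) * ((X - 1) * (X + C (k * (ν - 1) + 1))) := by
  obtain ⟨f, rfl⟩ := h.exists_eq_aeval_mul_pow hgen hx
  obtain ⟨g, rfl⟩ := h.exists_eq_pow_mul_aeval hgen hy
  refine ⟨f, g, rfl, rfl, eq_of_sub_taylor_eq_linear (Nat.cast_ne_zero.2 hk) ?_ ?_⟩
  · refine transcendental_iff_injective.1 (h.transcendental_mul (K := K)) ?_
    rw [← h.lie_aeval_mul_pow_pow_mul_aeval, hxy]
    simp [Algebra.smul_def]
  · have hroot : (ascPochhammer K k).eval (1 - k : K) = 0 := by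
      rw [← neg_sub, ← Nat.cast_pred (Nat.pos_of_ne_zero hk)]
      exact ascPochhammer_eval_neg_coe_nat_of_lt (Nat.sub_one_lt hk)
    rw [eval_mul, taylor_eval, ← sub_eq_add_neg, hroot, mul_zero]

theorem eq_of_lie_eq_two_smul [Nontrivial A] (h : IsCanonicalPair p q)
    (hgen : Algebra.adjoin K {p, q} = ⊤) {ν : K} {x y : A}
    (hx : x ∈ (LieAlgebra.ad K A (p * q)).eigenspace (1 : K))
    (hy : y ∈ (LieAlgebra.ad K A (p * q)).eigenspace (-1 : K))
    (hxy : ⁅x, y⁆ = (2 : K) • (p * q) + ν • (1 : A)) :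
    ∃ a : K, a ≠ 0 ∧
      ((x = a • ((ν • (1 : A) + p * q) * q) ∧ y = (-(1 / a)) • p) ∨
        (x = (-(1 / a)) • q ∧ y = a • (p * (ν • (1 : A) + p * q)))) := by
  obtain ⟨f, g, rfl, rfl, hfg⟩ := h.exists_aeval_of_lie_eq hgen one_ne_zero
    (by simpa using hx) (by simpa using hy) (by simpa using hxy)
  have hprod : f * g = -(X + C ν) := by
    refine mul_right_cancel₀ (X_sub_C_ne_zero (1 : K)) ?_
    simp only [Nat.cast_one, ascPochhammer_one, taylor_X, C_neg, C_1, one_pow, div_one, one_mul,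
      sub_add_cancel] at hfg
    rw [C_1]
    linear_combination hfg
  obtain ⟨a, ha, ⟨rfl, rfl⟩ | ⟨rfl, rfl⟩⟩ := exists_of_mul_eq_neg_X_add_C hprod
  · refine ⟨a, ha, Or.inl ⟨?_, ?_⟩⟩
    · simp [Algebra.smul_def, add_comm, mul_assoc]
    · simp [Algebra.smul_def, Algebra.commutes]
  · refine ⟨a, ha, Or.inr ⟨?_, ?_⟩⟩
    · simp [Algebra.smul_def]
    · simp only [pow_one, map_mul, map_add, aeval_X, aeval_C, Algebra.algebraMap_eq_smul_one,
        smul_one_mul, mul_smul_comm, add_comm]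

theorem eq_of_lie_eq_mul [Nontrivial A] (h : IsCanonicalPair p q)
    (hgen : Algebra.adjoin K {p, q} = ⊤) {ν : K} {x y : A}
    (hx : x ∈ (LieAlgebra.ad K A (p * q)).eigenspace (2 : K))
    (hy : y ∈ (LieAlgebra.ad K A (p * q)).eigenspace (-2 : K))
    (hxy : ⁅x, y⁆ = p * q + ν • (1 : A)) :
    ν = -(1 / 2) ∧ ∃ a : K, a ≠ 0 ∧
      x = (-(1 / 2) * a) • (q * q) ∧ y = (1 / (2 * a)) • (p * p) := by
  obtain ⟨f, g, rfl, rfl, hfg⟩ := h.exists_aeval_of_lie_eq hgen two_ne_zero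
    (by simpa using hx) (by simpa using hy) (by simpa using hxy)
  have hasc : taylor (-(2 : ℕ) : K) (ascPochhammer K 2) = (X - C 2) * (X - C 1) := by
    rw [ascPochhammer_succ_right, ascPochhammer_one, taylor_mul, map_add, taylor_X, Nat.cast_one,
      taylor_one, add_assoc, ← C_add, Nat.cast_ofNat, C_neg, ← sub_eq_add_neg]
    congr 1
    rw [sub_eq_add_neg, ← C_neg]
    norm_num
  have hcancel : f * g * (X - C 2) = C (-(1 / 4)) * (X - C (1 - 2 * ν)) := by
    refine mul_right_cancel₀ (X_sub_C_ne_zero (1 : K)) ?_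
    have hcoeff : C ((2 : ℕ) * (ν - 1) + 1 : K) = -C (1 - 2 * ν) := by
      rw [← C_neg, Nat.cast_ofNat]
      ring_nf
    have hscale : C (-(1 / (2 : ℕ) ^ 2 : K)) = C (-(1 / 4)) := by norm_num
    rw [mul_assoc, ← hasc, hfg, hcoeff, hscale, C_1]
    ring
  obtain ⟨hν, a, ha, rfl, rfl⟩ := exists_of_mul_mul_X_sub_C_eq (by norm_num) hcancel
  refine ⟨by linear_combination -(1 / 2) * hν, a / 2, by simpa using ha, ?_, ?_⟩
  · simp only [aeval_C, ← Algebra.smul_def, sq]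
    congr 1
    ring
  · rw [aeval_C, ← Algebra.commutes, ← Algebra.smul_def, mul_div_cancel₀ _ two_ne_zero, sq]

theorem le_two_of_lie_eq [Nontrivial A] (h : IsCanonicalPair p q)
    (hgen : Algebra.adjoin K {p, q} = ⊤) {k : ℕ} (hk : k ≠ 0) {ν : K} {x y : A}
    (hx : x ∈ (LieAlgebra.ad K A (p * q)).eigenspace (k : K))
    (hy : y ∈ (LieAlgebra.ad K A (p * q)).eigenspace (-k : K))
    (hxy : ⁅x, y⁆ = (2 / k : K) • (p * q) + ν • (1 : A)) : k ≤ 2 := by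
  obtain ⟨f, g, -, -, hfg⟩ := h.exists_aeval_of_lie_eq hgen hk hx hy hxy
  exact le_two_of_mul_taylor_ascPochhammer_eq (by simpa using hk) hfg

theorem exists_nat_mul_eq_two_of_isSl2Triple (h : IsCanonicalPair p q)
    (hgen : Algebra.adjoin K {p, q} = ⊤) {μ ν : K} {x y : A}
    (ht : IsSl2Triple (μ • (p * q) + ν • (1 : A)) x y) : ∃ k : ℕ, μ * k = 2 ∨ -μ * k = 2 := by
  have hμ : μ ≠ 0 := ne_zero_of_isSl2Triple_smul_add_smul_one ht
  obtain ⟨i, j, hij⟩ := h.exists_eq_sub_of_hasEigenvalue hgen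
    (Module.End.hasEigenvalue_of_hasEigenvector
      ⟨e_mem_eigenspace_ad_of_isSl2Triple ht, ht.e_ne_zero⟩)
  have hmul : μ * (j - i) = 2 := by rw [← hij, mul_div_cancel₀ _ hμ]
  rcases le_total i j with hle | hle
  · exact ⟨j - i, Or.inl (by rwa [Nat.cast_sub hle])⟩
  · exact ⟨i - j, Or.inr (by rwa [Nat.cast_sub hle, neg_mul, ← mul_neg, neg_sub])⟩

theorem eq_one_or_eq_two_of_isSl2Triple (h : IsCanonicalPair p q)
    (hgen : Algebra.adjoin K {p, q} = ⊤) {μ ν : K} {x y : A} {k : ℕ} (hk : μ * k = 2)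
    (ht : IsSl2Triple (μ • (p * q) + ν • (1 : A)) x y) :
    (μ = 1 ∧ ν = -(1 / 2) ∧ ∃ a : K, a ≠ 0 ∧
      x = (-(1 / 2) * a) • (q * q) ∧ y = (1 / (2 * a)) • (p * p)) ∨
    (μ = 2 ∧ ∃ a : K, a ≠ 0 ∧
      ((x = a • ((ν • (1 : A) + p * q) * q) ∧ y = (-(1 / a)) • p) ∨
        (x = (-(1 / a)) • q ∧ y = a • (p * (ν • (1 : A) + p * q))))) := by
  have : Nontrivial A := nontrivial_of_ne _ _ ht.h_ne_zero
  have hk0 : k ≠ 0 := by rintro rfl; simp at hk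
  have hμ : μ = 2 / k := eq_div_of_mul_eq (Nat.cast_ne_zero.2 hk0) hk
  have hweight : 2 / μ = k := by rw [hμ, div_div_cancel₀ two_ne_zero]
  have hx := e_mem_eigenspace_ad_of_isSl2Triple ht
  have hy := f_mem_eigenspace_ad_of_isSl2Triple ht
  have hxy := ht.lie_e_f
  rw [hweight] at hx hy
  rw [hμ] at hxy
  have hk2 : k ≤ 2 := h.le_two_of_lie_eq hgen hk0 hx hy hxy
  interval_cases k
  · exact absurd rfl hk0
  · exact Or.inr ⟨by simpa using hμ,
      h.eq_of_lie_eq_two_smul hgen (by simpa using hx) (by simpa using hy) (by simpa using hxy)⟩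
  · exact Or.inl ⟨by simpa using hμ,
      h.eq_of_lie_eq_mul hgen (by simpa using hx) (by simpa using hy) (by simpa using hxy)⟩

end Field

end IsCanonicalPair

theorem statement14_general {K A : Type*} [Field K] [CharZero K] [Ring A] [Algebra K A] {p q : A}
    (h : IsCanonicalPair p q) (hgen : Algebra.adjoin K {p, q} = ⊤) {μ ν : K} {x y : A}
    (ht : IsSl2Triple (μ • (p * q) + ν • (1 : A)) x y) :
    (μ = 1 ∨ μ = -1 ∨ μ = 2 ∨ μ = -2) ∧
    (μ = 1 → ν = -(1 / 2) ∧ ∃ a : K, a ≠ 0 ∧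
      x = (-(1 / 2) * a) • (q * q) ∧ y = (1 / (2 * a)) • (p * p)) ∧
    (μ = 2 → ∃ a : K, a ≠ 0 ∧
      ((x = a • ((ν • (1 : A) + p * q) * q) ∧ y = (-(1 / a)) • p) ∨
        (x = (-(1 / a)) • q ∧ y = a • (p * (ν • (1 : A) + p * q))))) := by
  obtain ⟨k, hk | hk⟩ := h.exists_nat_mul_eq_two_of_isSl2Triple hgen ht
  · rcases h.eq_one_or_eq_two_of_isSl2Triple hgen hk ht with ⟨rfl, hone⟩ | ⟨rfl, htwo⟩
    · exact ⟨by simp, fun _ => hone, fun h => by norm_num at h⟩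
    · exact ⟨by simp, fun h => by norm_num at h, fun _ => htwo⟩
  · have ht' : IsSl2Triple (-μ • (p * q) + -ν • (1 : A)) y x := by
      simpa only [neg_add, neg_smul] using ht.symm
    rcases h.eq_one_or_eq_two_of_isSl2Triple hgen hk ht' with ⟨hμ, -⟩ | ⟨hμ, -⟩
    · norm_num [neg_eq_iff_eq_neg.1 hμ]
    · norm_num [neg_eq_iff_eq_neg.1 hμ]

end AssociativeLie

theorem isCanonicalPair_wp_wq : IsCanonicalPair wp wq := by
  simpa only [IsCanonicalPair, wp, wq, map_add, map_mul, map_one] using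
    RingQuot.mkAlgHom_rel ℂ weylRel.rel

theorem adjoin_wp_wq : Algebra.adjoin ℂ {wp, wq} = ⊤ := by
  have hrange : Set.range (FreeAlgebra.ι ℂ : Fin 2 → _) =
      {FreeAlgebra.ι ℂ 0, FreeAlgebra.ι ℂ 1} := by
    ext x
    simp [eq_comm]
  have hmap : {wp, wq} = RingQuot.mkAlgHom ℂ weylRel '' Set.range (FreeAlgebra.ι ℂ) := by
    rw [hrange, Set.image_pair, wp, wq]
  rw [hmap, ← AlgHom.map_adjoin, FreeAlgebra.adjoin_range_ι, Algebra.map_top,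
    AlgHom.range_eq_top]
  exact RingQuot.mkAlgHom_surjective ℂ weylRel

/-- Joseph's classification of `sl(2)` triplets `X, Y, H` in `A₁` with `H = μ pq + ν`:
(1) `μ ∈ {1, -1, 2, -2}`;
(2a) if `μ = 1` then `ν = -1/2` and, for some nonzero `a`, `X = -(1/2)a q²` and
`Y = (1/(2a)) p²`;
(2b) if `μ = 2` then, with `b = ν`, for some nonzero `a`, either `X = a(b + pq)q` and
`Y = -(1/a) p`, or `X = -(1/a) q` and `Y = a p(b + pq)`. -/
theorem statement14 (X Y H : Weyl) (hX : X ≠ 0) (hY : Y ≠ 0) (hH : H ≠ 0)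
    (t1 : ⁅H, X⁆ = (2 : ℂ) • X) (t2 : ⁅H, Y⁆ = (-2 : ℂ) • Y) (t3 : ⁅X, Y⁆ = H)
    (μ ν : ℂ) (hμ : μ ≠ 0) (hHform : H = μ • (wp * wq) + ν • (1 : Weyl)) :
    (μ = 1 ∨ μ = -1 ∨ μ = 2 ∨ μ = -2) ∧
    (μ = 1 → ν = -(1/2) ∧ ∃ a : ℂ, a ≠ 0 ∧
      X = (-(1/2) * a) • (wq * wq) ∧ Y = (1/(2*a)) • (wp * wp)) ∧
    (μ = 2 → ∃ a : ℂ, a ≠ 0 ∧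
      ((X = a • ((ν • (1 : Weyl) + wp * wq) * wq) ∧ Y = (-(1/a)) • wp) ∨
       (X = (-(1/a)) • wq ∧ Y = a • (wp * (ν • (1 : Weyl) + wp * wq))))) := by
  subst hHform
  let := LieRing.ofAssociativeRing (A := Weyl)
  refine statement14_general isCanonicalPair_wp_wq adjoin_wp_wq ⟨hH, t3, ?_, ?_⟩
  · rw [t1, ofNat_smul_eq_nsmul]
  · rw [t2, neg_smul, ofNat_smul_eq_nsmul]
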